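/- arXiv:2012.13511 — 4 statements merged into one kernel-verified Lean document; each statement's English description precedes it below -/
import Mathlib

section
/- Let f be analytic on 𝔻 with f(0) = 0, f'(0) = 1, let a₂ = f''(0)/2, and let f₂(z) = z + a₂ z². (1) If f is convex (f'(z) ≠ 0 and Re(1 + z f''(z)/f'(z)) > 0 on 𝔻), then z ↦ f₂(ρz)/ρ = z + a₂ρ z² belongs to S*_car for every 0 < ρ ≤ 1/3. (2) If f is univalent on 𝔻, then z ↦ f₂(ρz)/ρ belongs to S*_car for every 0 < ρ ≤ 1/6. -/
open Complex Metric

def omegaCar : Set ℂ := {w : ℂ | ∃ u : ℂ, ‖u‖ < 1 ∧ w = 1 + u + u ^ 2 / 2}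

def SCar (f : ℂ → ℂ) : Prop :=
  DifferentiableOn ℂ f (Metric.ball (0 : ℂ) 1) ∧ f 0 = 0 ∧ deriv f 0 = 1 ∧
    (∀ z : ℂ, ‖z‖ < 1 → z ≠ 0 → f z ≠ 0) ∧
    (∀ z : ℂ, ‖z‖ < 1 → z ≠ 0 → z * deriv f z / f z ∈ omegaCar)

lemma mem_omegaCar_aux (w : ℂ) (hw : ‖w‖ < 1 / 3) : (1 + 2 * w) / (1 + w) ∈ omegaCar := by
  have h1 : 1 + w ≠ 0 := by
    intro h
    have : w = -1 := by linear_combination h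
    rw [this] at hw; norm_num at hw
  set v : ℂ := (1 + 3 * w) / (1 + w) with hv
  -- the image disk
  have hn : w.re ^ 2 + w.im ^ 2 < 1 / 9 := by
    have := Complex.sq_norm w
    rw [Complex.normSq_apply] at this
    nlinarith [norm_nonneg w]
  have hdisk : ‖v‖ ^ 2 < 3 / 2 * v.re := by
    have hp : 0 < Complex.normSq (1 + w) := Complex.normSq_pos.2 h1
    have e1 : ‖v‖ ^ 2 = Complex.normSq (1 + 3 * w) / Complex.normSq (1 + w) := by
      rw [Complex.sq_norm, hv, Complex.normSq_div]
    have e2 : v.re = ((1 + 3 * w) * (starRingEnd ℂ) (1 + w)).re / Complex.normSq (1 + w) := by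
      rw [hv, Complex.div_re]; simp [Complex.mul_re]; ring
    rw [e1, e2, ← mul_div_assoc]
    apply div_lt_div_of_pos_right _ hp
    simp [Complex.normSq_apply]
    nlinarith
  have hvre : 0 < v.re := by nlinarith [sq_nonneg ‖v‖]
  -- square root
  set s : ℂ := v ^ (1 / 2 : ℂ) with hs
  have hss : s ^ 2 = v := by
    rw [hs, one_div]
    exact_mod_cast Complex.cpow_nat_inv_pow v (n := 2) (by norm_num)
  have hsre : 0 < s.re := by
    have hv0 : v ≠ 0 := by rintro h; simp [h] at hvre
    rw [hs, Complex.cpow_def_of_ne_zero hv0, Complex.exp_re]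
    apply mul_pos (Real.exp_pos _)
    apply Real.cos_pos_of_mem_Ioo
    have h1 := Complex.neg_pi_lt_arg v
    have h2 := Complex.arg_le_pi v
    have h3 := Complex.abs_arg_lt_pi_div_two_iff.2 (Or.inl hvre)
    rw [abs_lt] at h3
    have : (Complex.log v * (1 / 2)).im = v.arg / 2 := by
      have : (1 / 2 : ℂ) = ((1 / 2 : ℝ) : ℂ) := by norm_num
      rw [this, Complex.im_mul_ofReal, Complex.log_im]; ring
    rw [this]
    constructor <;> linarith
  refine ⟨s - 1, ?_, ?_⟩
  · have e : ‖v‖ = s.re ^ 2 + s.im ^ 2 := by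
      rw [← hss, norm_pow, Complex.sq_norm, Complex.normSq_apply]; ring
    have e' : v.re = s.re ^ 2 - s.im ^ 2 := by
      rw [← hss]; simp [pow_two]
    have : ‖s - 1‖ ^ 2 < 1 := by
      rw [Complex.sq_norm, Complex.normSq_apply]
      simp
      rw [e, e'] at hdisk
      by_contra hcon
      push Not at hcon
      have : 2 * s.re ≤ s.re ^ 2 + s.im ^ 2 := by nlinarith
      nlinarith [sq_nonneg s.im, sq_pos_of_pos hsre]
    nlinarith [norm_nonneg (s - 1)]
  · have : (1 + 2 * w) / (1 + w) = (1 + v) / 2 := by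
      rw [hv]; field_simp; ring
    rw [this, ← hss]; ring

lemma scar_of_norm_le (c : ℂ) (hc : ‖c‖ ≤ 1 / 3) : SCar (fun z : ℂ => z + c * z ^ 2) := by
  have hd : ∀ z : ℂ, HasDerivAt (fun z : ℂ => z + c * z ^ 2) (1 + 2 * c * z) z := by
    intro z
    have := (hasDerivAt_id z).add (((hasDerivAt_id z).pow 2).const_mul c)
    convert! this using 1
    simp; ring
  have hcz : ∀ z : ℂ, ‖z‖ < 1 → z ≠ 0 → ‖c * z‖ < 1 / 3 := by
    intro z hz h0
    rw [norm_mul]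
    nlinarith [norm_nonneg c, norm_nonneg z]
  have hne : ∀ z : ℂ, ‖z‖ < 1 → z ≠ 0 → 1 + c * z ≠ 0 := by
    intro z hz h0 h
    have h1 := hcz z hz h0
    have : c * z = -1 := by linear_combination h
    rw [this] at h1; norm_num at h1
  refine ⟨fun z _ => (hd z).differentiableAt.differentiableWithinAt, by simp, ?_, ?_, ?_⟩
  · rw [(hd 0).deriv]; simp
  · intro z hz h0
    have : z + c * z ^ 2 = z * (1 + c * z) := by ring
    simp only [this]
    exact mul_ne_zero h0 (hne z hz h0)
  · intro z hz h0
    have h1 := hne z hz h0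
    have : z * deriv (fun z : ℂ => z + c * z ^ 2) z / (z + c * z ^ 2)
        = (1 + 2 * (c * z)) / (1 + c * z) := by
      rw [(hd z).deriv, show z + c * z ^ 2 = z * (1 + c * z) by ring,
        mul_div_mul_left _ _ h0]; ring
    simp only [this]
    exact mem_omegaCar_aux _ (hcz z hz h0)

lemma convex_bound (f : ℂ → ℂ)
    (hfd : DifferentiableOn ℂ f (Metric.ball (0 : ℂ) 1))
    (hf1 : deriv f 0 = 1)
    (h : ∀ z : ℂ, ‖z‖ < 1 → deriv f z ≠ 0 ∧
        0 < (1 + z * deriv (deriv f) z / deriv f z).re) :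
    ‖deriv (deriv f) 0‖ ≤ 2 := by
  have hd1 : DifferentiableOn ℂ (deriv f) (ball 0 1) := hfd.deriv isOpen_ball
  have hd2 : DifferentiableOn ℂ (deriv (deriv f)) (ball 0 1) := hd1.deriv isOpen_ball
  set q : ℂ → ℂ := fun z => z * deriv (deriv f) z / deriv f z with hq
  have hqd : DifferentiableOn ℂ q (ball 0 1) :=
    (differentiableOn_id.mul hd2).div hd1 (fun z hz => (h z (by simpa using hz)).1)
  have hq2 : ∀ z ∈ ball (0:ℂ) 1, 2 + q z ≠ 0 := by
    intro z hz h0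
    have h2 := (h z (by simpa using hz)).2
    have : (2 + q z).re = 0 := by rw [h0]; simp
    simp [hq] at this h2
    linarith
  set ω : ℂ → ℂ := fun z => q z / (2 + q z) with hω
  have hωd : DifferentiableOn ℂ ω (ball 0 1) :=
    hqd.div ((differentiableOn_const 2).add hqd) hq2
  have hq0 : q 0 = 0 := by simp [hq]
  have hω0 : ω 0 = 0 := by simp [hω, hq0]
  have hmaps : Set.MapsTo ω (ball 0 1) (closedBall (ω 0) 1) := by
    intro z hz
    rw [hω0, mem_closedBall_zero_iff]
    simp only [hω]
    rw [norm_div]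
    apply div_le_one_of_le₀ _ (norm_nonneg _)
    have h2 := (h z (by simpa using hz)).2
    change 0 < (1 + q z).re at h2
    rw [← sq_le_sq₀ (norm_nonneg _) (norm_nonneg _), Complex.sq_norm, Complex.sq_norm,
      Complex.normSq_apply, Complex.normSq_apply]
    simp at h2 ⊢
    nlinarith
  have key := Complex.norm_deriv_le_one_of_mapsTo_ball hωd hmaps one_pos
  have h0m : (0:ℂ) ∈ ball (0:ℂ) 1 := by simp
  have hqderiv : HasDerivAt q (deriv (deriv f) 0) 0 := by
    have d1 : HasDerivAt (deriv f) (deriv (deriv f) 0) 0 :=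
      (hd1.differentiableAt (isOpen_ball.mem_nhds h0m)).hasDerivAt
    have d2 : HasDerivAt (deriv (deriv f)) (deriv (deriv (deriv f)) 0) 0 :=
      (hd2.differentiableAt (isOpen_ball.mem_nhds h0m)).hasDerivAt
    have := ((hasDerivAt_id (0:ℂ)).mul d2).div d1 (by rw [hf1]; simp)
    convert! this using 1
    simp [hf1]
  have hωderiv : HasDerivAt ω (deriv (deriv f) 0 / 2) 0 := by
    have := hqderiv.div (hqderiv.const_add 2) (hq2 0 h0m)
    convert! this using 1
    simp [hq0]; ring
  rw [hωderiv.deriv, norm_div] at key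
  simp at key
  linarith

lemma polar_lintegral (G : ℂ → ENNReal) (hG : Measurable G) :
    ∫⁻ z, G z = ∫⁻ ρ in Set.Ioi (0:ℝ), ∫⁻ θ in Set.Ioo (-Real.pi) Real.pi,
      ENNReal.ofReal ρ * G (circleMap 0 ρ θ) := by
  rw [← Complex.lintegral_comp_polarCoord_symm]
  have e : ∀ p : ℝ × ℝ, Complex.polarCoord.symm p = circleMap 0 p.1 p.2 := by
    intro p
    rw [Complex.polarCoord_symm_apply, circleMap, Complex.exp_mul_I]
    simp
  simp_rw [e, smul_eq_mul]
  rw [polarCoord_target, MeasureTheory.Measure.volume_eq_prod,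
    ← MeasureTheory.Measure.prod_restrict, MeasureTheory.lintegral_prod]
  apply Measurable.aemeasurable
  apply Measurable.mul (by fun_prop)
  apply hG.comp
  apply Continuous.measurable
  unfold circleMap
  fun_prop

lemma polar_lintegral' (G : ℂ → ENNReal) (hG : Measurable G) :
    ∫⁻ z, G z = ∫⁻ θ in Set.Ioo (-Real.pi) Real.pi, ∫⁻ ρ in Set.Ioi (0:ℝ),
      ENNReal.ofReal ρ * G (circleMap 0 ρ θ) := by
  rw [polar_lintegral G hG, MeasureTheory.lintegral_lintegral_swap]
  apply Measurable.aemeasurable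
  apply Measurable.mul (by fun_prop)
  apply hG.comp
  apply Continuous.measurable
  unfold circleMap
  fun_prop

lemma inner_integral (b : ℝ) (hb : 0 < b) :
    ∫⁻ ρ in Set.Ioi (0:ℝ), (Set.Ici b⁻¹).indicator (fun ρ => ENNReal.ofReal (ρ ^ (-2:ℝ))) ρ
      = ENNReal.ofReal b := by
  rw [MeasureTheory.lintegral_indicator measurableSet_Ici,
    MeasureTheory.Measure.restrict_restrict measurableSet_Ici]
  have hb' : 0 < b⁻¹ := inv_pos.2 hb
  have : Set.Ici b⁻¹ ∩ Set.Ioi 0 = Set.Ici b⁻¹ := by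
    apply Set.inter_eq_left.2
    intro x hx
    exact lt_of_lt_of_le hb' hx
  rw [this, MeasureTheory.setLIntegral_congr MeasureTheory.Ioi_ae_eq_Ici.symm,
    ← MeasureTheory.ofReal_integral_eq_lintegral_ofReal
      (integrableOn_Ioi_rpow_of_lt (by norm_num) hb')]
  · rw [integral_Ioi_rpow_of_lt (by norm_num) hb']
    congr 1
    norm_num
    rw [Real.rpow_neg_one, inv_inv]
  · filter_upwards [MeasureTheory.ae_restrict_mem measurableSet_Ioi] with x hx
    have : (0:ℝ) < x := hb'.trans hx
    positivity

lemma re_circle (a : ℂ) (θ : ℝ) :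
    (a * circleMap 0 1 θ).re = a.re * Real.cos θ - a.im * Real.sin θ := by
  simp [circleMap, Complex.mul_re, Complex.exp_ofReal_mul_I_re, Complex.exp_ofReal_mul_I_im]

lemma upper_bound (a : ℂ) (K : ℝ) (hK : ‖a‖ < K) (B : Set ℂ)
    (hB : ∀ w ∈ B, w ≠ 0 ∧ ‖w‖⁻¹ ≤ K - (a * w).re / ‖w‖) :
    ∫⁻ w in B, ENNReal.ofReal (‖w‖⁻¹ ^ 3) ≤ ENNReal.ofReal (2 * Real.pi * K) := by
  set C : Set ℂ := {w | w ≠ 0 ∧ ‖w‖⁻¹ ≤ K - (a * w).re / ‖w‖} with hC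
  have hCm : MeasurableSet C := by
    apply MeasurableSet.inter
    · exact (measurableSet_singleton (0:ℂ)).compl
    · exact measurableSet_le (f := fun w : ℂ => ‖w‖⁻¹) (g := fun w : ℂ => K - (a * w).re / ‖w‖)
        (by fun_prop) (by fun_prop)
  have hmeas : Measurable (fun w : ℂ => ENNReal.ofReal (‖w‖⁻¹ ^ 3)) := by fun_prop
  calc ∫⁻ w in B, ENNReal.ofReal (‖w‖⁻¹ ^ 3)
      ≤ ∫⁻ w in C, ENNReal.ofReal (‖w‖⁻¹ ^ 3) := MeasureTheory.lintegral_mono_set hB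
    _ = ∫⁻ w, C.indicator (fun w => ENNReal.ofReal (‖w‖⁻¹ ^ 3)) w :=
        (MeasureTheory.lintegral_indicator hCm _).symm
    _ = ∫⁻ θ in Set.Ioo (-Real.pi) Real.pi, ∫⁻ ρ in Set.Ioi (0:ℝ),
      ENNReal.ofReal ρ * C.indicator (fun w => ENNReal.ofReal (‖w‖⁻¹ ^ 3)) (circleMap 0 ρ θ) :=
        polar_lintegral' _ (hmeas.indicator hCm)
    _ = ∫⁻ θ in Set.Ioo (-Real.pi) Real.pi,
          ENNReal.ofReal (K - (a * circleMap 0 1 θ).re) := by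
        apply MeasureTheory.lintegral_congr
        intro θ
        have hpos : 0 < K - (a * circleMap 0 1 θ).re := by
          have h1 := Complex.re_le_norm (a * circleMap 0 1 θ)
          rw [norm_mul] at h1
          simp at h1
          simp
          linarith
        rw [← inner_integral _ hpos]
        apply MeasureTheory.setLIntegral_congr_fun measurableSet_Ioi
        intro ρ hρ
        have hρ : 0 < ρ := hρ
        have hmem : circleMap 0 ρ θ ∈ C ↔ ρ ∈ Set.Ici (K - (a * circleMap 0 1 θ).re)⁻¹ := by
          have e1 : circleMap 0 ρ θ = ρ * circleMap 0 1 θ := by simp [circleMap]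
          have e2 : (a * circleMap 0 ρ θ).re / ρ = (a * circleMap 0 1 θ).re := by
            rw [e1, mul_left_comm, Complex.re_ofReal_mul]
            field_simp
          have e3 : circleMap 0 ρ θ ≠ 0 := circleMap_ne_center hρ.ne'
          simp only [hC, Set.mem_ofPred_eq, norm_circleMap_zero, abs_of_pos hρ, e2, Set.mem_Ici]
          rw [inv_le_comm₀ hρ hpos]
          exact and_iff_right e3
        by_cases hm : circleMap 0 ρ θ ∈ C
        · simp only [Set.indicator_of_mem hm, Set.indicator_of_mem (hmem.1 hm)]
          rw [← ENNReal.ofReal_mul hρ.le, norm_circleMap_zero, abs_of_pos hρ]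
          congr 1
          rw [Real.rpow_neg hρ.le, Real.rpow_two]
          field_simp
        · simp only [Set.indicator_of_notMem hm, Set.indicator_of_notMem (fun h => hm (hmem.2 h)), mul_zero]
    _ = ENNReal.ofReal (∫ θ in Set.Ioo (-Real.pi) Real.pi, (K - (a * circleMap 0 1 θ).re)) := by
        rw [MeasureTheory.ofReal_integral_eq_lintegral_ofReal]
        · apply MeasureTheory.IntegrableOn.mono_set (t := Set.Icc (-Real.pi) Real.pi) _ Set.Ioo_subset_Icc_self
          apply Continuous.integrableOn_Icc
          simp only [re_circle]
          fun_prop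
        · apply Filter.Eventually.of_forall
          intro θ
          have h1 := Complex.re_le_norm (a * circleMap 0 1 θ)
          rw [norm_mul] at h1
          simp at h1
          simp
          linarith
    _ = ENNReal.ofReal (2 * Real.pi * K) := by
        congr 1
        rw [← MeasureTheory.integral_Ioc_eq_integral_Ioo,
          ← intervalIntegral.integral_of_le (by linarith [Real.pi_pos])]
        simp only [re_circle]
        rw [intervalIntegral.integral_sub, intervalIntegral.integral_sub]
        · simp
          rw [← two_mul]; simp
        all_goals apply Continuous.intervalIntegrable; fun_prop

lemma mean_sq (k : ℂ → ℂ) (hk : DifferentiableOn ℂ k (ball 0 1)) (hk0 : k 0 = 1) (ρ : ℝ)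
    (hρ0 : 0 < ρ) (hρ1 : ρ < 1) :
    2 * Real.pi * (1 + ‖deriv k 0‖ ^ 2 * ρ ^ 2) ≤
      ∫ θ in Set.Ioo (-Real.pi) Real.pi, ‖k (circleMap 0 ρ θ)‖ ^ 2 := by
  set k1 := dslope k 0 with hk1
  set c := deriv k 0 with hc
  have hk1d : DifferentiableOn ℂ k1 (ball 0 1) :=
    (Complex.differentiableOn_dslope (isOpen_ball.mem_nhds (by simp))).2 hk
  have hkz : ∀ z, k z = 1 + z * k1 z := by
    intro z
    have := sub_smul_dslope k 0 z
    simp [hk0] at this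
    rw [this]; ring
  set H : ℂ → ℂ := fun z => 1 + 2 * z * k1 z +
    (ρ:ℂ) ^ 2 * (2 * (starRingEnd ℂ) c * k1 z - (starRingEnd ℂ) c * c) with hH
  have hHd : DifferentiableOn ℂ H (ball 0 1) := by
    simp only [hH]; fun_prop
  have hsub : closedBall (0:ℂ) |ρ| ⊆ ball 0 1 := by
    rw [abs_of_pos hρ0]; exact closedBall_subset_ball hρ1
  have hav := circleAverage_of_differentiable_on_off_countable (f := H) (c := 0) (R := ρ)
    Set.countable_empty (hHd.continuousOn.mono hsub) (fun z hz =>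
      hHd.differentiableAt (isOpen_ball.mem_nhds (hsub (ball_subset_closedBall hz.1))))
  have hH0 : H 0 = ((1 + ‖c‖ ^ 2 * ρ ^ 2 : ℝ) : ℂ) := by
    have : (starRingEnd ℂ) c * c = ((‖c‖ ^ 2 : ℝ) : ℂ) := by
      rw [Complex.conj_mul']; push_cast; rfl
    simp only [hH, hk1, dslope_same, ← hc]
    push_cast at this ⊢
    linear_combination (ρ:ℂ) ^ 2 * this
  have hcirc : ∀ θ, circleMap 0 ρ θ ∈ ball (0:ℂ) 1 := by
    intro θ; simp [abs_of_pos hρ0, hρ1]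
  have hcontH : Continuous (fun θ => H (circleMap 0 ρ θ)) :=
    hHd.continuousOn.comp_continuous (continuous_circleMap 0 ρ) hcirc
  have hcontk : Continuous (fun θ => k (circleMap 0 ρ θ)) :=
    hk.continuousOn.comp_continuous (continuous_circleMap 0 ρ) hcirc
  have hpt : ∀ θ, (H (circleMap 0 ρ θ)).re ≤ ‖k (circleMap 0 ρ θ)‖ ^ 2 := by
    intro θ
    set z := circleMap 0 ρ θ with hz
    have hzn : z.re ^ 2 + z.im ^ 2 = ρ ^ 2 := by
      have : ‖z‖ ^ 2 = ρ ^ 2 := by rw [hz, norm_circleMap_zero, sq_abs]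
      rw [← this, Complex.sq_norm, Complex.normSq_apply]; ring
    rw [hkz z, Complex.sq_norm, Complex.normSq_apply]
    simp only [hH]
    rw [← Complex.ofReal_pow, ← hzn]
    rw [Complex.add_re (1 + 2 * z * k1 z), Complex.re_ofReal_mul]
    simp
    nlinarith [mul_nonneg (add_nonneg (sq_nonneg z.re) (sq_nonneg z.im)) (add_nonneg (sq_nonneg ((k1 z).re - c.re)) (sq_nonneg ((k1 z).im - c.im)))]
  have hintegral : ∫ θ in (-Real.pi)..Real.pi, H (circleMap 0 ρ θ) = 2 * Real.pi * H 0 := by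
    rw [Real.circleAverage_def] at hav
    have hper : Function.Periodic (fun θ => H (circleMap 0 ρ θ)) (2 * Real.pi) := by
      intro θ; simp only [periodic_circleMap 0 ρ θ]
    have := hper.intervalIntegral_add_eq (-Real.pi) 0
    rw [show -Real.pi + 2 * Real.pi = Real.pi by ring, zero_add] at this
    rw [this, ← hav]
    rw [Complex.real_smul]
    have : (Real.pi : ℂ) ≠ 0 := by exact_mod_cast Real.pi_ne_zero
    push_cast
    field_simp
  rw [← MeasureTheory.integral_Ioc_eq_integral_Ioo,
          ← intervalIntegral.integral_of_le (by linarith [Real.pi_pos])]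
  calc 2 * Real.pi * (1 + ‖c‖ ^ 2 * ρ ^ 2)
      = (∫ θ in (-Real.pi)..Real.pi, H (circleMap 0 ρ θ)).re := by
        rw [hintegral, hH0]
        norm_cast
    _ = ∫ θ in (-Real.pi)..Real.pi, (H (circleMap 0 ρ θ)).re := by
        have := Complex.reCLM.intervalIntegral_comp_comm (μ := MeasureTheory.volume)
          (hcontH.intervalIntegrable (-Real.pi) Real.pi)
        exact this.symm
    _ ≤ _ := by
        apply intervalIntegral.integral_mono_on (by linarith [Real.pi_pos])
        · exact (Complex.continuous_re.comp hcontH).intervalIntegrable _ _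
        · exact (hcontk.norm.pow 2).intervalIntegrable _ _
        · intro θ _; exact hpt θ

lemma lower_bound (k : ℂ → ℂ) (hk : DifferentiableOn ℂ k (ball 0 1)) (hk0 : k 0 = 1)
    (s r : ℝ) (hs : 0 < s) (hsr : s ≤ r) (hr : r < 1) :
    ENNReal.ofReal (2 * Real.pi * (s⁻¹ - r⁻¹ + ‖deriv k 0‖ ^ 2 * (r - s))) ≤
      ∫⁻ z in {z : ℂ | s ≤ ‖z‖ ∧ ‖z‖ ≤ r}, ENNReal.ofReal (‖z‖⁻¹ ^ 3 * ‖k z‖ ^ 2) := by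
  set A : Set ℂ := {z : ℂ | s ≤ ‖z‖ ∧ ‖z‖ ≤ r} with hA
  set c := deriv k 0 with hc
  have hAm : MeasurableSet A := by
    exact MeasurableSet.inter
      (measurableSet_le (f := fun _ : ℂ => s) (g := fun z : ℂ => ‖z‖) (by fun_prop) (by fun_prop))
      (measurableSet_le (f := fun z : ℂ => ‖z‖) (g := fun _ : ℂ => r) (by fun_prop) (by fun_prop))
  have hAsub : A ⊆ ball 0 1 := fun z hz => by
    simp only [mem_ball_zero_iff]; exact lt_of_le_of_lt hz.2 hr
  set F : ℂ → ENNReal := fun z => ENNReal.ofReal (‖z‖⁻¹ ^ 3 * ‖k z‖ ^ 2) with hF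
  have hFc : ContinuousOn F A := by
    apply ENNReal.continuous_ofReal.comp_continuousOn
    apply ContinuousOn.mul
    · apply ContinuousOn.pow
      apply ContinuousOn.inv₀ continuous_norm.continuousOn
      intro z hz
      exact (lt_of_lt_of_le hs hz.1).ne'
    · exact ((hk.continuousOn.mono hAsub).norm).pow 2
  have hmeas : Measurable (A.indicator F) := by
    classical
    rw [← Set.piecewise_eq_indicator]
    exact hFc.measurable_piecewise continuousOn_const hAm
  rw [← MeasureTheory.lintegral_indicator hAm, polar_lintegral _ hmeas]
  calc ENNReal.ofReal (2 * Real.pi * (s⁻¹ - r⁻¹ + ‖c‖ ^ 2 * (r - s)))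
      = ENNReal.ofReal (∫ ρ in Set.Icc s r, 2 * Real.pi * (ρ ^ (-2:ℤ) + ‖c‖ ^ 2)) := by
        congr 1
        rw [MeasureTheory.integral_Icc_eq_integral_Ioc, ← intervalIntegral.integral_of_le hsr,
          intervalIntegral.integral_const_mul]
        have h0 : (0:ℝ) ∉ Set.uIcc s r := by
          rw [Set.uIcc_of_le hsr]; intro h; linarith [h.1]
        rw [intervalIntegral.integral_add, integral_zpow]
        · simp; norm_num; ring
        · right; exact ⟨by norm_num, h0⟩
        · apply ContinuousOn.intervalIntegrable
          intro x hx
          apply ContinuousAt.continuousWithinAt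
          apply continuousAt_zpow₀
          left; rintro rfl; exact h0 hx
        · simp
    _ = ∫⁻ ρ in Set.Icc s r, ENNReal.ofReal (2 * Real.pi * (ρ ^ (-2:ℤ) + ‖c‖ ^ 2)) := by
        rw [MeasureTheory.ofReal_integral_eq_lintegral_ofReal]
        · apply ContinuousOn.integrableOn_Icc
          apply ContinuousOn.mul continuousOn_const
          apply ContinuousOn.add _ continuousOn_const
          intro x hx
          apply ContinuousAt.continuousWithinAt
          apply continuousAt_zpow₀
          left; rintro rfl; linarith [hx.1]
        · filter_upwards [MeasureTheory.ae_restrict_mem measurableSet_Icc] with x hx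
          have := Real.pi_pos
          have : 0 < x := lt_of_lt_of_le hs hx.1
          positivity
    _ ≤ ∫⁻ ρ in Set.Icc s r, ∫⁻ θ in Set.Ioo (-Real.pi) Real.pi,
          ENNReal.ofReal ρ * A.indicator F (circleMap 0 ρ θ) := by
        apply MeasureTheory.setLIntegral_mono' measurableSet_Icc
        intro ρ hρ
        have hρ0 : 0 < ρ := lt_of_lt_of_le hs hρ.1
        have hcirc : ∀ θ, circleMap 0 ρ θ ∈ A := by
          intro θ; simp [hA, abs_of_pos hρ0, hρ.1, hρ.2]
        have hcontk : Continuous (fun θ => k (circleMap 0 ρ θ)) :=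
          hk.continuousOn.comp_continuous (continuous_circleMap 0 ρ) (fun θ => hAsub (hcirc θ))
        have e : ∀ θ, ENNReal.ofReal ρ * A.indicator F (circleMap 0 ρ θ) =
            ENNReal.ofReal (ρ ^ (-2:ℤ) * ‖k (circleMap 0 ρ θ)‖ ^ 2) := by
          intro θ
          rw [Set.indicator_of_mem (hcirc θ), hF]
          simp only
          rw [← ENNReal.ofReal_mul hρ0.le, norm_circleMap_zero, abs_of_pos hρ0, ← mul_assoc]
          congr 2
          rw [zpow_neg]
          norm_cast
          field_simp
        simp_rw [e]
        rw [← MeasureTheory.ofReal_integral_eq_lintegral_ofReal]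
        · apply ENNReal.ofReal_le_ofReal
          rw [MeasureTheory.integral_const_mul]
          have hm := mean_sq k hk hk0 ρ hρ0 (lt_of_le_of_lt hρ.2 hr)
          calc 2 * Real.pi * (ρ ^ (-2:ℤ) + ‖c‖ ^ 2)
              = ρ ^ (-2:ℤ) * (2 * Real.pi * (1 + ‖c‖ ^ 2 * ρ ^ 2)) := by
                rw [zpow_neg]; norm_cast; field_simp
            _ ≤ _ := by
                apply mul_le_mul_of_nonneg_left hm
                positivity
        · apply MeasureTheory.IntegrableOn.mono_set (t := Set.Icc (-Real.pi) Real.pi) _ Set.Ioo_subset_Icc_self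
          apply Continuous.integrableOn_Icc
          exact continuous_const.mul (hcontk.norm.pow 2)
        · apply Filter.Eventually.of_forall
          intro θ
          positivity
    _ ≤ _ := by
        apply MeasureTheory.lintegral_mono_set
        intro ρ hρ
        exact lt_of_lt_of_le hs hρ.1

lemma exists_factor (f : ℂ → ℂ)
    (hfd : DifferentiableOn ℂ f (ball (0 : ℂ) 1))
    (hf0 : f 0 = 0) (hf1 : deriv f 0 = 1) (hinj : Set.InjOn f (ball (0 : ℂ) 1)) :
    ∃ h k : ℂ → ℂ, DifferentiableOn ℂ h (ball 0 1) ∧ DifferentiableOn ℂ k (ball 0 1) ∧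
      (∀ z, f z = z * h z) ∧ h 0 = 1 ∧ (∀ z ∈ ball (0:ℂ) 1, h z ≠ 0) ∧
      deriv h 0 = deriv (deriv f) 0 / 2 ∧ k 0 = 1 ∧ deriv k 0 = deriv (deriv f) 0 / 4 ∧
      ∀ z ∈ ball (0:ℂ) 1, ‖k z‖ ^ 2 = ‖deriv f z‖ ^ 2 * ‖h z‖⁻¹ ^ 3 := by
  have h0m : (0:ℂ) ∈ ball (0:ℂ) 1 := by simp
  have hnhds : ball (0:ℂ) 1 ∈ nhds (0:ℂ) := isOpen_ball.mem_nhds h0m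
  set h := dslope f 0 with hh
  have hhd : DifferentiableOn ℂ h (ball 0 1) :=
    (Complex.differentiableOn_dslope hnhds).2 hfd
  have hfz : ∀ z, f z = z * h z := by
    intro z
    have := sub_smul_dslope f 0 z
    simp [hf0] at this
    rw [this]
  have hh0 : h 0 = 1 := by rw [hh, dslope_same, hf1]
  have hne : ∀ z ∈ ball (0:ℂ) 1, h z ≠ 0 := by
    intro z hz hz0
    by_cases hzz : z = 0
    · rw [hzz, hh0] at hz0; exact one_ne_zero hz0
    · apply hzz
      apply hinj hz h0m
      rw [hfz, hz0, hf0, mul_zero]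
  have hhd' : DifferentiableOn ℂ (deriv h) (ball 0 1) := hhd.deriv isOpen_ball
  have hfd' : DifferentiableOn ℂ (deriv f) (ball 0 1) := hfd.deriv isOpen_ball
  have hderiv : ∀ z ∈ ball (0:ℂ) 1, HasDerivAt h (deriv h z) z := fun z hz =>
    (hhd.differentiableAt (isOpen_ball.mem_nhds hz)).hasDerivAt
  have hdh0 : deriv h 0 = deriv (deriv f) 0 / 2 := by
    have e : deriv f =ᶠ[nhds 0] fun z => h z + z * deriv h z := by
      filter_upwards [hnhds] with z hz
      have : f = fun z => z * h z := funext hfz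
      rw [this]
      have := ((hasDerivAt_id z).mul (hderiv z hz)).deriv
      simp at this
      exact this
    rw [e.deriv_eq]
    have d2 := (hhd'.differentiableAt hnhds).hasDerivAt
    have := ((hderiv 0 h0m).add ((hasDerivAt_id (0:ℂ)).mul d2)).deriv
    simp at this
    have e2 : deriv (fun z => h z + z * deriv h z) 0 = deriv h 0 + deriv h 0 := this
    rw [e2]; ring
  obtain ⟨L, hL0, hL⟩ := ((hhd'.div hhd hne).isExactOn_ball).with_val_at 0 0
  have hexp : ∀ z ∈ ball (0:ℂ) 1, h z = Complex.exp (L z) := by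
    have hd : ∀ z ∈ ball (0:ℂ) 1, HasDerivAt (fun z => h z * Complex.exp (- L z)) 0 z := by
      intro z hz
      have := (hderiv z hz).mul ((hL z hz).neg.cexp)
      convert! this using 1
      simp
      field_simp [hne z hz]
      ring
    intro z hz
    have hconst := isOpen_ball.is_const_of_deriv_eq_zero (𝕜 := ℂ)
      (convex_ball (0:ℂ) 1).isPreconnected
      (fun z hz => (hd z hz).differentiableAt.differentiableWithinAt)
      (fun z hz => (hd z hz).deriv) hz h0m
    simp [hL0, hh0] at hconst
    rw [Complex.exp_neg] at hconst
    have := Complex.exp_ne_zero (L z)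
    field_simp at hconst
    exact hconst
  have hLd : DifferentiableOn ℂ L (ball 0 1) := fun z hz =>
    (hL z hz).differentiableAt.differentiableWithinAt
  refine ⟨h, fun z => deriv f z * Complex.exp (-(3 / 2) * L z), hhd, ?_, hfz, hh0, hne, hdh0,
    ?_, ?_, ?_⟩
  · exact hfd'.mul ((hLd.const_mul _).cexp)
  · simp [hf1, hL0]
  · have d1 := (hfd'.differentiableAt hnhds).hasDerivAt
    have := (d1.mul (((hL 0 h0m).const_mul (-(3 / 2))).cexp)).deriv
    refine Eq.trans this ?_
    simp [hL0, hh0, hf1, hdh0]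
    ring
  · intro z hz
    rw [norm_mul, mul_pow, hexp z hz, Complex.norm_exp, Complex.norm_exp, ← Real.exp_neg,
      ← Real.exp_nat_mul, ← Real.exp_nat_mul]
    congr 2
    have : (-(3 / 2) : ℂ) = ((-(3 / 2) : ℝ) : ℂ) := by norm_num
    rw [this, Complex.re_ofReal_mul]
    push_cast; ring

lemma contain (f h : ℂ → ℂ) (hhd : DifferentiableOn ℂ h (ball 0 1))
    (hfz : ∀ z, f z = z * h z) (hh0 : h 0 = 1) (hne : ∀ z ∈ ball (0:ℂ) 1, h z ≠ 0)
    (r : ℝ) (hr0 : 0 < r) (hr : r < 1) :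
    ∃ C : ℝ, 0 < C ∧ ∀ z, ‖z‖ ≤ r →
      ‖z‖ * (1 + (deriv h 0 * f z).re - C * ‖f z‖ ^ 2) ≤ ‖f z‖ := by
  have hnhds : ball (0:ℂ) 1 ∈ nhds (0:ℂ) := isOpen_ball.mem_nhds (by simp)
  set a := deriv h 0 with ha
  set h1 := dslope h 0 with hh1
  have hh1d : DifferentiableOn ℂ h1 (ball 0 1) := (Complex.differentiableOn_dslope hnhds).2 hhd
  set h2 := dslope h1 0 with hh2
  have hh2d : DifferentiableOn ℂ h2 (ball 0 1) := (Complex.differentiableOn_dslope hnhds).2 hh1d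
  have e1 : ∀ z, h z = 1 + z * h1 z := by
    intro z
    have := sub_smul_dslope h 0 z
    simp [hh0] at this
    rw [this]; ring
  have e2 : ∀ z, h1 z = a + z * h2 z := by
    intro z
    have := sub_smul_dslope h1 0 z
    simp only [hh1, dslope_same, ← ha, sub_zero, smul_eq_mul] at this
    rw [this]; ring
  have hsub : closedBall (0:ℂ) r ⊆ ball 0 1 := closedBall_subset_ball hr
  have hcpt := isCompact_closedBall (0:ℂ) r
  obtain ⟨C1, hC1⟩ := hcpt.exists_bound_of_continuousOn (hh1d.continuousOn.mono hsub)
  obtain ⟨C2, hC2⟩ := hcpt.exists_bound_of_continuousOn (hh2d.continuousOn.mono hsub)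
  obtain ⟨M, hM⟩ := hcpt.exists_bound_of_continuousOn (f := fun z => (h z)⁻¹)
    ((hhd.continuousOn.mono hsub).inv₀ (fun z hz => hne z (hsub hz)))
  have hz0 : (0:ℂ) ∈ closedBall (0:ℂ) r := by simp [hr0.le]
  have hC1p : 0 ≤ C1 := (norm_nonneg _).trans (hC1 0 hz0)
  have hC2p : 0 ≤ C2 := (norm_nonneg _).trans (hC2 0 hz0)
  refine ⟨(C2 + ‖a‖ * C1) * M ^ 2 + 1, by positivity, ?_⟩
  intro z hz
  have hzm : z ∈ closedBall (0:ℂ) r := by simpa using hz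
  have b1 := hC1 z hzm
  have b2 := hC2 z hzm
  have b3 := hM z hzm
  have hzw : ‖z‖ ^ 2 ≤ M ^ 2 * ‖f z‖ ^ 2 := by
    have : z = (h z)⁻¹ * f z := by
      rw [hfz]; field_simp [hne z (hsub hzm)]
    have hle : ‖z‖ ≤ M * ‖f z‖ := by
      conv_lhs => rw [this]
      rw [norm_mul]
      exact mul_le_mul_of_nonneg_right b3 (norm_nonneg _)
    calc ‖z‖ ^ 2 ≤ (M * ‖f z‖) ^ 2 := pow_le_pow_left₀ (norm_nonneg _) hle 2
      _ = _ := by ring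
  have hform : h z = 1 + a * f z - z ^ 2 * (a * h1 z - h2 z) := by
    rw [hfz]
    have := e2 z
    have := e1 z
    linear_combination (1 - a * z) * e1 z + z * e2 z
  have hre : 1 + (a * f z).re - (C2 + ‖a‖ * C1) * ‖z‖ ^ 2 ≤ ‖h z‖ := by
    have t1 := Complex.re_le_norm (h z)
    have t2 : (z ^ 2 * (a * h1 z - h2 z)).re ≤ (C2 + ‖a‖ * C1) * ‖z‖ ^ 2 := by
      refine (Complex.re_le_norm _).trans ?_
      rw [norm_mul, norm_pow, mul_comm]
      apply mul_le_mul_of_nonneg_right _ (by positivity)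
      refine (norm_sub_le _ _).trans ?_
      rw [norm_mul]
      nlinarith [mul_le_mul_of_nonneg_left b1 (norm_nonneg a)]
    have t3 : (h z).re = 1 + (a * f z).re - (z ^ 2 * (a * h1 z - h2 z)).re := by
      conv_lhs => rw [hform]
      rw [Complex.sub_re, Complex.add_re, Complex.one_re]
    linarith
  have hfn : ‖f z‖ = ‖z‖ * ‖h z‖ := by rw [hfz, norm_mul]
  conv_rhs => rw [hfn]
  apply mul_le_mul_of_nonneg_left _ (norm_nonneg _)
  have hp : 0 ≤ C2 + ‖a‖ * C1 := by positivity
  nlinarith [mul_le_mul_of_nonneg_left hzw hp, sq_nonneg ‖f z‖]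

lemma det_aux (c : ℂ) :
    (((ContinuousLinearMap.toSpanSingleton ℂ c).restrictScalars ℝ : ℂ →L[ℝ] ℂ)).det = ‖c‖ ^ 2 := by
  simp [ContinuousLinearMap.det, LinearMap.det_restrictScalars,
      Algebra.norm_complex_eq, Complex.normSq_eq_norm_sq]

lemma bieberbach_aux (f : ℂ → ℂ)
    (hfd : DifferentiableOn ℂ f (ball (0 : ℂ) 1))
    (hf0 : f 0 = 0) (hf1 : deriv f 0 = 1) (hinj : Set.InjOn f (ball (0 : ℂ) 1))
    (r ε : ℝ) (hr0 : 0 < r) (hr : r < 1) (hε : 0 < ε) :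
    ‖deriv (deriv f) 0 / 4‖ ^ 2 * (r - ε) ≤ r⁻¹ + ε := by
  obtain ⟨h, k, hhd, hkd, hfz, hh0, hne, hdh, hk0, hdk, hkn⟩ :=
    exists_factor f hfd hf0 hf1 hinj
  obtain ⟨C, hC, hcont⟩ := contain f h hhd hfz hh0 hne r hr0 hr
  set a := deriv h 0 with ha
  set c := deriv (deriv f) 0 / 4 with hc
  have hQ : 0 < C / ε + ‖a‖ + 1 := by positivity
  set s : ℝ := min (min r ε) (C / ε + ‖a‖ + 1)⁻¹ with hs
  have hs0 : 0 < s := by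
    rw [hs]; exact lt_min (lt_min hr0 hε) (inv_pos.2 hQ)
  have hsr : s ≤ r := (min_le_left _ _).trans (min_le_left _ _)
  have hsε : s ≤ ε := (min_le_left _ _).trans (min_le_right _ _)
  have hsQ : C / ε + ‖a‖ + 1 ≤ s⁻¹ := by
    rw [le_inv_comm₀ hQ hs0]; exact min_le_right _ _
  set A : Set ℂ := {z : ℂ | s ≤ ‖z‖ ∧ ‖z‖ ≤ r} with hA
  have hAm : MeasurableSet A := by
    exact MeasurableSet.inter
      (measurableSet_le (f := fun _ : ℂ => s) (g := fun z : ℂ => ‖z‖) (by fun_prop) (by fun_prop))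
      (measurableSet_le (f := fun z : ℂ => ‖z‖) (g := fun _ : ℂ => r) (by fun_prop) (by fun_prop))
  have hAsub : A ⊆ ball 0 1 := fun z hz => by
    simp only [mem_ball_zero_iff]; exact lt_of_le_of_lt hz.2 hr
  have hK : ‖a‖ < s⁻¹ + ε := by
    have : 0 < C / ε := by positivity
    linarith
  have hup := upper_bound a (s⁻¹ + ε) hK (Set.image f A) (by
    rintro w ⟨z, hz, rfl⟩
    have hz0 : z ≠ 0 := by
      rintro rfl
      have := hz.1
      simp at this
      linarith
    have hw0 : f z ≠ 0 := by
      rw [hfz]; exact mul_ne_zero hz0 (hne z (hAsub hz))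
    refine ⟨hw0, ?_⟩
    have hwp : 0 < ‖f z‖ := norm_pos_iff.2 hw0
    have h1 := hcont z hz.2
    set w := f z with hw
    have h2 : s * (1 + (a * w).re - C * ‖w‖ ^ 2) ≤ ‖w‖ := by
      rcases le_total 0 (1 + (a * w).re - C * ‖w‖ ^ 2) with hX | hX
      · exact (mul_le_mul_of_nonneg_right hz.1 hX).trans h1
      · nlinarith
    have h3 : ‖w‖⁻¹ + (a * w).re / ‖w‖ - C * ‖w‖ ≤ s⁻¹ := by
      have : ‖w‖⁻¹ + (a * w).re / ‖w‖ - C * ‖w‖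
          = (1 + (a * w).re - C * ‖w‖ ^ 2) / ‖w‖ := by field_simp
      rw [this, div_le_iff₀ hwp, ← div_eq_inv_mul, le_div_iff₀ hs0]
      linarith
    rcases le_total (C * ‖w‖) ε with hle | hle
    · linarith
    · have h4 : ‖w‖⁻¹ ≤ C / ε := by
        rw [inv_le_comm₀ hwp (by positivity), inv_div, div_le_iff₀ hC]
        linarith
      have h5 : - ‖a‖ ≤ (a * w).re / ‖w‖ ∧ (a * w).re / ‖w‖ ≤ ‖a‖ := by
        have := Complex.abs_re_le_norm (a * w)
        rw [norm_mul, abs_le] at this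
        rw [le_div_iff₀ hwp, div_le_iff₀ hwp]
        constructor <;> linarith
      linarith)
  have hlow := lower_bound k hkd hk0 s r hs0 hsr hr
  rw [← hA, hdk] at hlow
  have hjac := MeasureTheory.lintegral_image_eq_lintegral_abs_det_fderiv_mul
    MeasureTheory.volume hAm (f := f)
    (f' := fun z => (ContinuousLinearMap.toSpanSingleton ℂ (deriv f z)).restrictScalars ℝ)
    (fun z hz => ((hfd.differentiableAt
      (isOpen_ball.mem_nhds (hAsub hz))).hasDerivAt.hasFDerivAt.restrictScalars ℝ).hasFDerivWithinAt)
    (hinj.mono hAsub) (fun w => ENNReal.ofReal (‖w‖⁻¹ ^ 3))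
  have heq : ∫⁻ z in A, ENNReal.ofReal (‖z‖⁻¹ ^ 3 * ‖k z‖ ^ 2) =
      ∫⁻ w in Set.image f A, ENNReal.ofReal (‖w‖⁻¹ ^ 3) := by
    rw [hjac]
    apply MeasureTheory.setLIntegral_congr_fun hAm
    intro z hz
    simp only
    rw [det_aux, ← ENNReal.ofReal_mul (abs_nonneg _), abs_of_nonneg (by positivity),
      hkn z (hAsub hz), hfz z, norm_mul, mul_inv, mul_pow]
    congr 1
    ring
  rw [heq] at hlow
  have hfin := hlow.trans hup
  rw [ENNReal.ofReal_le_ofReal_iff (by have := Real.pi_pos; positivity)] at hfin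
  have hfin' := le_of_mul_le_mul_left hfin (by have := Real.pi_pos; positivity)
  nlinarith [mul_le_mul_of_nonneg_left hsε (sq_nonneg ‖c‖)]

lemma bieberbach (f : ℂ → ℂ)
    (hfd : DifferentiableOn ℂ f (ball (0 : ℂ) 1))
    (hf0 : f 0 = 0) (hf1 : deriv f 0 = 1) (hinj : Set.InjOn f (ball (0 : ℂ) 1)) :
    ‖deriv (deriv f) 0‖ ≤ 4 := by
  set X : ℝ := ‖deriv (deriv f) 0 / 4‖ ^ 2 with hX
  have hlim1 : Filter.Tendsto (fun ε : ℝ => X * (1 - ε - ε)) (nhdsWithin 0 (Set.Ioi 0))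
      (nhds (X * (1 - 0 - 0))) :=
    (Continuous.tendsto (by fun_prop) 0).mono_left nhdsWithin_le_nhds
  have hlim2 : Filter.Tendsto (fun ε : ℝ => (1 - ε)⁻¹ + ε) (nhdsWithin 0 (Set.Ioi 0))
      (nhds ((1 - 0)⁻¹ + 0)) := by
    apply Filter.Tendsto.mono_left _ nhdsWithin_le_nhds
    apply Filter.Tendsto.add _ Filter.tendsto_id
    apply Filter.Tendsto.inv₀ _ (by norm_num)
    exact Continuous.tendsto (by fun_prop) 0
  have hle := le_of_tendsto_of_tendsto hlim1 hlim2 (by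
    filter_upwards [Ioo_mem_nhdsGT (show (0:ℝ) < 1 by norm_num)] with ε hε
    exact bieberbach_aux f hfd hf0 hf1 hinj (1 - ε) ε (by linarith [hε.2]) (by linarith [hε.1]) hε.1)
  norm_num at hle
  have h1 : ‖deriv (deriv f) 0 / 4‖ ≤ 1 := by
    nlinarith [norm_nonneg (deriv (deriv f) 0 / 4)]
  rw [norm_div] at h1
  norm_num at h1
  linarith

theorem stmt_15 (f : ℂ → ℂ)
    (hfd : DifferentiableOn ℂ f (Metric.ball (0 : ℂ) 1))
    (hf0 : f 0 = 0) (hf1 : deriv f 0 = 1)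
    (a₂ : ℂ) (ha₂ : a₂ = deriv (deriv f) 0 / 2) :
    ((∀ z : ℂ, ‖z‖ < 1 → deriv f z ≠ 0 ∧
        0 < (1 + z * deriv (deriv f) z / deriv f z).re) →
      ∀ ρ : ℝ, 0 < ρ → ρ ≤ 1 / 3 → SCar (fun z : ℂ => z + a₂ * (ρ : ℂ) * z ^ 2)) ∧
    (Set.InjOn f (Metric.ball (0 : ℂ) 1) →
      ∀ ρ : ℝ, 0 < ρ → ρ ≤ 1 / 6 → SCar (fun z : ℂ => z + a₂ * (ρ : ℂ) * z ^ 2)) := by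
  have hn : ‖a₂‖ = ‖deriv (deriv f) 0‖ / 2 := by rw [ha₂, norm_div]; simp
  constructor
  · intro h ρ h0 h1
    have hb := convex_bound f hfd hf1 h
    apply scar_of_norm_le
    rw [norm_mul, Complex.norm_real, Real.norm_of_nonneg h0.le]
    have := norm_nonneg a₂
    nlinarith
  · intro h ρ h0 h1
    have hb := bieberbach f hfd hf0 hf1 h
    apply scar_of_norm_le
    rw [norm_mul, Complex.norm_real, Real.norm_of_nonneg h0.le]
    have := norm_nonneg a₂
    nlinarith
end

section
/- Let β > 1 and let f be analytic on 𝔻 with f(0) = 0, f'(0) = 1, f(z) ≠ 0 on 𝔻 \ {0}, and Re(z f'(z)/f(z)) < β for all z ∈ 𝔻 \ {0} (i.e. f ∈ M(β)). Then z f'(z)/f(z) ∈ Ω_car for every z with 0 < |z| < 1/(4β − 3). -/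
open Complex Metric

lemma mem_omegaCar_of_half (w : ℂ) (h : ‖w - 1‖ < 1 / 2) : w ∈ omegaCar := by
  set s : ℂ := (1 + 2 * (w - 1)) ^ (2⁻¹ : ℂ) with hs
  have h2 : s ^ 2 = 1 + 2 * (w - 1) := Complex.cpow_ofNat_inv_pow _ 2
  have hre : 0 ≤ s.re := by rw [hs, Complex.cpow_inv_two_re]; positivity
  refine ⟨s - 1, ?_, by linear_combination -h2 / 2⟩
  have h3 : (s - 1) * (s + 1) = 2 * (w - 1) := by linear_combination h2
  have h4 : ‖s - 1‖ * ‖s + 1‖ = 2 * ‖w - 1‖ := by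
    rw [← norm_mul, h3, norm_mul]; simp
  have h5 : 1 ≤ ‖s + 1‖ := by
    have := Complex.re_le_norm (s + 1)
    simp at this
    linarith
  nlinarith [norm_nonneg (s - 1)]

theorem stmt_17 (β : ℝ) (hβ : 1 < β) (f : ℂ → ℂ)
    (hfd : DifferentiableOn ℂ f (Metric.ball (0 : ℂ) 1))
    (hf0 : f 0 = 0) (hf1 : deriv f 0 = 1)
    (hfne : ∀ z : ℂ, ‖z‖ < 1 → z ≠ 0 → f z ≠ 0)
    (hM : ∀ z : ℂ, ‖z‖ < 1 → z ≠ 0 → (z * deriv f z / f z).re < β) :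
    ∀ z : ℂ, z ≠ 0 → ‖z‖ < 1 / (4 * β - 3) → z * deriv f z / f z ∈ omegaCar := by
  intro z hz hzr
  have hpos : 0 < 4 * β - 3 := by linarith
  have hzr' : ‖z‖ * (4 * β - 3) < 1 := (lt_div_iff₀ hpos).mp hzr
  have hz1 : ‖z‖ < 1 := by nlinarith [norm_nonneg z]
  apply mem_omegaCar_of_half
  set g : ℂ → ℂ := dslope f 0 with hg
  have hgd : DifferentiableOn ℂ g (Metric.ball (0 : ℂ) 1) :=
    (Complex.differentiableOn_dslope (Metric.isOpen_ball.mem_nhds (by simp))).mpr hfd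
  have hfg : ∀ x, f x = x * g x := by
    intro x
    have := sub_smul_dslope f 0 x
    simp [hf0] at this
    exact this.symm
  have hgne : ∀ x ∈ Metric.ball (0 : ℂ) 1, g x ≠ 0 := by
    intro x hx h0
    by_cases hx0 : x = 0
    · subst hx0
      rw [hg, dslope_same, hf1] at h0
      exact one_ne_zero h0
    · exact hfne x (by simpa using hx) hx0 (by rw [hfg, h0, mul_zero])
  have hkey : ∀ x ∈ Metric.ball (0 : ℂ) 1, x ≠ 0 →
      x * deriv f x / f x - 1 = x * deriv g x / g x := by
    intro x hx hx0
    have hga : DifferentiableAt ℂ g x := hgd.differentiableAt (Metric.isOpen_ball.mem_nhds hx)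
    have hd : deriv f x = g x + x * deriv g x := by
      have h1 : HasDerivAt (fun y => y * g y) (1 * g x + x * deriv g x) x :=
        (hasDerivAt_id x).mul hga.hasDerivAt
      have h2 : f = fun y => y * g y := funext hfg
      conv_lhs => rw [h2]
      rw [h1.deriv, one_mul]
    have := hgne x hx
    rw [hd, hfg x]
    field_simp
    ring
  have hzb : z ∈ Metric.ball (0 : ℂ) 1 := by simpa using hz1
  rw [hkey z hzb hz]
  have hB := Complex.borelCaratheodory_zero (f := fun x => x * deriv g x / g x) (M := β - 1)
    (R := 1) (z := z) (by linarith)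
    ((differentiableOn_id.mul (hgd.deriv Metric.isOpen_ball)).div hgd hgne)
    (by
      intro x hx
      by_cases hx0 : x = 0
      · subst hx0
        simp
        linarith
      · have h := hM x (by simpa using hx) hx0
        have h' := congrArg Complex.re (hkey x hx hx0)
        simp only [Complex.sub_re, Complex.one_re] at h'
        change (x * deriv g x / g x).re ≤ β - 1
        linarith) one_pos hzb (by simp)
  refine lt_of_le_of_lt hB ?_
  rw [div_lt_iff₀ (by linarith)]
  nlinarith
end

section
/- Let f ∈ S*_car and let 0 ≤ α < 1. Define s₁(α) = 1 if 0 ≤ α ≤ 1/4, s₁(α) = √((3 − 4α)/2) if 1/4 < α ≤ 5/8, and s₁(α) = 1 − √(2α − 1) if 5/8 < α < 1. Then Re(z f'(z)/f(z)) > α for every z with 0 < |z| < s₁(α). -/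
open Complex Metric

theorem car_real_bound (α : ℝ) (s : ℝ) (hs : s = if α ≤ 1 / 4 then 1
      else if α ≤ 5 / 8 then Real.sqrt ((3 - 4 * α) / 2)
      else 1 - Real.sqrt (2 * α - 1)) (r : ℝ) (hr0 : 0 ≤ r) (hr : r < s)
      (u : ℂ) (hu : ‖u‖ ≤ r) : α < (1 + u + u ^ 2 / 2).re := by
  have h1 : (1 + u + u ^ 2 / 2).re = 1 + u.re + (u.re ^ 2 - u.im ^ 2) / 2 := by
    have : u ^ 2 / 2 = ((1 / 2 : ℝ) : ℂ) * (u * u) := by push_cast; ring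
    rw [this]
    rw [Complex.add_re, Complex.add_re, Complex.one_re, Complex.re_ofReal_mul, Complex.mul_re]
    ring
  rw [h1]
  have h2 : u.re ^ 2 + u.im ^ 2 ≤ r ^ 2 := by
    have h3 := Complex.sq_norm u
    rw [Complex.normSq_apply] at h3
    have h4 : ‖u‖ ^ 2 ≤ r ^ 2 := by gcongr
    nlinarith
  have h3 : -r ≤ u.re := by
    have := Complex.abs_re_le_norm u
    linarith [neg_abs_le u.re]
  split_ifs at hs with ha hb
  · subst hs
    nlinarith [sq_nonneg (u.re + 1 / 2)]
  · subst hs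
    rw [Real.lt_sqrt hr0] at hr
    nlinarith [sq_nonneg (u.re + 1 / 2)]
  · have h5 : 0 ≤ Real.sqrt (2 * α - 1) := Real.sqrt_nonneg _
    have h6 : Real.sqrt (2 * α - 1) ^ 2 = 2 * α - 1 := Real.sq_sqrt (by linarith)
    have h7 : 1 / 2 < Real.sqrt (2 * α - 1) := by
      rw [Real.lt_sqrt (by norm_num)]
      linarith
    have h8 : r < 1 / 2 := by linarith
    have h9 : 2 * α - 1 < (1 - r) ^ 2 := by nlinarith
    nlinarith [mul_nonneg (by linarith : 0 ≤ u.re + r) (by linarith : 0 ≤ u.re - r + 1)]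

theorem car_s_le_one (α : ℝ) (s : ℝ) (hs : s = if α ≤ 1 / 4 then 1
      else if α ≤ 5 / 8 then Real.sqrt ((3 - 4 * α) / 2)
      else 1 - Real.sqrt (2 * α - 1)) : s ≤ 1 := by
  split_ifs at hs with ha hb
  · exact hs.le
  · rw [hs, Real.sqrt_le_iff]
    constructor <;> linarith
  · linarith [Real.sqrt_nonneg (2 * α - 1)]

theorem car_root (w : ℂ) (hw : w ∈ omegaCar) :
    2 * w - 1 ∈ Complex.slitPlane ∧ ‖(2 * w - 1) ^ (2⁻¹ : ℂ) - 1‖ < 1 ∧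
      w = 1 + ((2 * w - 1) ^ (2⁻¹ : ℂ) - 1) + ((2 * w - 1) ^ (2⁻¹ : ℂ) - 1) ^ 2 / 2 := by
  obtain ⟨u, hu, rfl⟩ := hw
  have h0 : 2 * (1 + u + u ^ 2 / 2) - 1 = (1 + u) ^ 2 := by ring
  have hre : 0 < (1 + u).re := by
    have := Complex.abs_re_le_norm u
    rw [Complex.add_re, Complex.one_re]
    linarith [neg_abs_le u.re]
  rw [h0, Complex.sq_cpow_two_inv hre]
  refine ⟨?_, by simpa using hu, by ring⟩
  rw [Complex.mem_slitPlane_iff, pow_two, Complex.mul_re, Complex.mul_im]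
  by_cases hi : (1 + u).im = 0
  · left
    rw [hi]
    nlinarith
  · right
    have := mul_ne_zero hre.ne' hi
    intro h
    apply this
    linarith

theorem stmt_18 (f : ℂ → ℂ) (hf : SCar f) (α : ℝ) (hα0 : 0 ≤ α) (hα1 : α < 1)
    (s : ℝ) (hs : s = if α ≤ 1 / 4 then 1
      else if α ≤ 5 / 8 then Real.sqrt ((3 - 4 * α) / 2)
      else 1 - Real.sqrt (2 * α - 1)) :
    ∀ z : ℂ, z ≠ 0 → ‖z‖ < s → α < (z * deriv f z / f z).re := by
  intro z hz hzs
  have hz1 : ‖z‖ < 1 := hzs.trans_le (car_s_le_one α s hs)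
  obtain ⟨hd, hf0, hf1, hne, hmem⟩ := hf
  have hk : DifferentiableOn ℂ (dslope f 0) (ball (0 : ℂ) 1) :=
    (Complex.differentiableOn_dslope (ball_mem_nhds _ one_pos)).2 hd
  have hk0 : dslope f 0 0 = 1 := by rw [dslope_same, hf1]
  have hkz : ∀ w : ℂ, w ≠ 0 → dslope f 0 w = f w / w := by
    intro w hw
    rw [dslope_of_ne _ hw, slope_def_field, hf0, sub_zero, sub_zero]
  let g : ℂ → ℂ := fun w => deriv f w / dslope f 0 w
  have hg0 : g 0 = 1 := by simp only [g]; rw [hf1, hk0, div_one]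
  have hgz : ∀ w : ℂ, w ≠ 0 → g w = w * deriv f w / f w := by
    intro w hw
    simp only [g]
    rw [hkz w hw, div_div_eq_mul_div, mul_comm]
  have hkne : ∀ w ∈ ball (0 : ℂ) 1, dslope f 0 w ≠ 0 := by
    intro w hw
    by_cases h : w = 0
    · rw [h, hk0]; exact one_ne_zero
    · rw [hkz w h]
      exact div_ne_zero (hne w (by simpa using hw) h) h
  have hgd : DifferentiableOn ℂ g (ball (0 : ℂ) 1) :=
    (hd.deriv isOpen_ball).div hk hkne
  have hgm : ∀ w ∈ ball (0 : ℂ) 1, g w ∈ omegaCar := by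
    intro w hw
    by_cases h : w = 0
    · rw [h, hg0]
      exact ⟨0, by simp, by simp⟩
    · rw [hgz w h]
      exact hmem w (by simpa using hw) h
  let ω : ℂ → ℂ := fun w => (2 * g w - 1) ^ (2⁻¹ : ℂ) - 1
  have hωd : DifferentiableOn ℂ ω (ball (0 : ℂ) 1) := by
    refine DifferentiableOn.sub_const (DifferentiableOn.cpow ((hgd.const_mul 2).sub_const 1)
      (differentiableOn_const _) ?_) 1
    intro w hw
    exact (car_root _ (hgm w hw)).1
  have hω0 : ω 0 = 0 := by
    simp only [ω]
    rw [hg0]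
    norm_num
  have hωm : Set.MapsTo ω (ball (0 : ℂ) 1) (closedBall 0 1) := by
    intro w hw
    simpa using (car_root _ (hgm w hw)).2.1.le
  have hS : ‖ω z‖ ≤ ‖z‖ := Complex.norm_le_norm_of_mapsTo_ball hωd hωm hω0 hz1
  rw [← hgz z hz, (car_root _ (hgm z (by simpa using hz1))).2.2]
  exact car_real_bound α s hs ‖z‖ (norm_nonneg _) hzs (ω z) hS
end

section
/- Let f be analytic on 𝔻 with f(0) = 0, f'(0) = 1, and Re(f(z)/z) > 0 for all z ∈ 𝔻 \ {0}. Then z f'(z)/f(z) ∈ Ω_car for every z with 0 < |z| < 1/(2 + √5) = √5 − 2. -/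
open Complex Metric

lemma omega_of_small (v : ℂ) (hv : ‖v‖ < 1 / 2) : 1 + v ∈ omegaCar := by
  obtain ⟨s, hs, hre⟩ : ∃ s : ℂ, s ^ 2 = 1 + 2 * v ∧ 0 ≤ s.re := by
    obtain ⟨s, hs⟩ : ∃ s : ℂ, s ^ 2 = 1 + 2 * v :=
      ⟨_, Complex.cpow_nat_inv_pow (1 + 2 * v) two_ne_zero⟩
    rcases le_total 0 s.re with h | h
    · exact ⟨s, hs, h⟩
    · exact ⟨-s, by rw [neg_sq, hs], by simpa using h⟩
  refine ⟨s - 1, ?_, ?_⟩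
  · have h1 : ‖s - 1‖ * ‖s + 1‖ < 1 := by
      rw [← norm_mul, show (s - 1) * (s + 1) = 2 * v by linear_combination hs, norm_mul]
      norm_num
      linarith
    have h2 : 1 ≤ ‖s + 1‖ := by
      have := Complex.re_le_norm (s + 1)
      simp at this
      linarith
    nlinarith [norm_nonneg (s - 1)]
  · linear_combination -hs / 2

lemma mobius_half (a w : ℂ) (ha : 0 < a.re) (hw : 0 < w.re) :
    w + (starRingEnd ℂ) a ≠ 0 ∧ ‖(w - a) / (w + (starRingEnd ℂ) a)‖ ≤ 1 := by
  have h0 : w + (starRingEnd ℂ) a ≠ 0 := by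
    intro h
    have := congrArg Complex.re h
    simp at this
    linarith
  refine ⟨h0, ?_⟩
  rw [norm_div, div_le_one (norm_pos_iff.mpr h0)]
  refine le_of_pow_le_pow_left₀ two_ne_zero (norm_nonneg _) ?_
  rw [Complex.sq_norm, Complex.sq_norm, Complex.normSq_apply, Complex.normSq_apply]
  simp
  nlinarith [mul_pos ha hw]

lemma mobius_disk (z w : ℂ) (hz : ‖z‖ < 1) (hw : ‖w‖ < 1) :
    1 + (starRingEnd ℂ) z * w ≠ 0 ∧ ‖(w + z) / (1 + (starRingEnd ℂ) z * w)‖ < 1 := by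
  have h0 : 1 + (starRingEnd ℂ) z * w ≠ 0 := by
    intro h
    have h1 : (starRingEnd ℂ) z * w = -1 := by linear_combination h
    have h2 := congrArg norm h1
    simp at h2
    nlinarith [norm_nonneg z, norm_nonneg w]
  refine ⟨h0, ?_⟩
  rw [norm_div, div_lt_one (norm_pos_iff.mpr h0)]
  refine lt_of_pow_lt_pow_left₀ 2 (norm_nonneg _) ?_
  have hz2 : ‖z‖ ^ 2 < 1 := by nlinarith [norm_nonneg z]
  have hw2 : ‖w‖ ^ 2 < 1 := by nlinarith [norm_nonneg w]
  rw [Complex.sq_norm, Complex.normSq_apply] at *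
  rw [Complex.sq_norm, Complex.normSq_apply] at *
  simp
  nlinarith [mul_pos (sub_pos.mpr hz2) (sub_pos.mpr hw2)]

lemma deriv_bound (p : ℂ → ℂ) (hp : DifferentiableOn ℂ p (Metric.ball (0 : ℂ) 1))
    (hre : ∀ z : ℂ, ‖z‖ < 1 → 0 < (p z).re) (z : ℂ) (hz : ‖z‖ < 1) :
    ‖deriv p z‖ * (1 - ‖z‖ ^ 2) ≤ 2 * (p z).re := by
  set a := p z with ha
  have hapos : 0 < a.re := hre z hz
  let m : ℂ → ℂ := fun w => (w + z) / (1 + (starRingEnd ℂ) z * w)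
  let h : ℂ → ℂ := fun w => (p (m w) - a) / (p (m w) + (starRingEnd ℂ) a)
  have hm0 : m 0 = z := by simp [m]
  have hh0 : h 0 = 0 := by simp [h, hm0, ha]
  have hmd : DifferentiableOn ℂ m (Metric.ball (0 : ℂ) 1) := by
    refine DifferentiableOn.div (by fun_prop) (by fun_prop) ?_
    intro w hw
    exact (mobius_disk z w hz (by simpa using hw)).1
  have hmm : Set.MapsTo m (Metric.ball (0 : ℂ) 1) (Metric.ball (0 : ℂ) 1) := by
    intro w hw
    exact mem_ball_zero_iff.mpr (mobius_disk z w hz (by simpa using hw)).2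
  have hpm : DifferentiableOn ℂ (fun w => p (m w)) (Metric.ball (0 : ℂ) 1) := hp.comp hmd hmm
  have hhd : DifferentiableOn ℂ h (Metric.ball (0 : ℂ) 1) := by
    refine DifferentiableOn.div (hpm.sub_const _) (hpm.add_const _) ?_
    intro w hw
    exact (mobius_half a (p (m w)) hapos (hre _ (by simpa using hmm hw))).1
  have hhm : Set.MapsTo h (Metric.ball (0 : ℂ) 1) (Metric.closedBall (h 0) 1) := by
    intro w hw
    rw [hh0]
    exact mem_closedBall_zero_iff.mpr
      (mobius_half a (p (m w)) hapos (hre _ (by simpa using hmm hw))).2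
  have key := Complex.norm_deriv_le_one_of_mapsTo_ball hhd hhm one_pos
  have hmder : HasDerivAt m (1 - (starRingEnd ℂ) z * z) 0 := by
    have h1 : HasDerivAt (fun w : ℂ => w + z) 1 0 := (hasDerivAt_id _).add_const z
    have h2 : HasDerivAt (fun w : ℂ => 1 + (starRingEnd ℂ) z * w) ((starRingEnd ℂ) z) 0 := by
      simpa using ((hasDerivAt_id (0 : ℂ)).const_mul ((starRingEnd ℂ) z)).const_add 1
    have h3 := h1.div h2 (by simp)
    refine h3.congr_deriv ?_
    simp
    try ring
  have hpder : HasDerivAt p (deriv p z) (m 0) := by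
    rw [hm0]
    exact (hp.differentiableAt (Metric.isOpen_ball.mem_nhds (by simpa using hz))).hasDerivAt
  have hc : HasDerivAt (fun w => p (m w)) (deriv p z * (1 - (starRingEnd ℂ) z * z)) 0 :=
    hpder.comp 0 hmder
  have hne := (mobius_half a a hapos hapos).1
  have hhder := (hc.sub_const a).div (hc.add_const ((starRingEnd ℂ) a))
    (by rw [hm0]; exact hne)
  have hval : deriv h 0 * (a + (starRingEnd ℂ) a) = deriv p z * (1 - (starRingEnd ℂ) z * z) := by
    have : deriv h 0 = _ := hhder.deriv
    rw [this, hm0, ← ha]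
    field_simp
    ring
  have e1 : a + (starRingEnd ℂ) a = ((2 * a.re : ℝ) : ℂ) := Complex.add_conj a
  have e2 : 1 - (starRingEnd ℂ) z * z = ((1 - ‖z‖ ^ 2 : ℝ) : ℂ) := by
    rw [mul_comm, Complex.mul_conj, ← Complex.sq_norm]; push_cast; ring
  have hn := congrArg norm hval
  rw [e1, e2, norm_mul, norm_mul, Complex.norm_real, Complex.norm_real, Real.norm_eq_abs,
    Real.norm_eq_abs, abs_of_pos (by linarith : 0 < 2 * a.re),
    abs_of_pos (by nlinarith [norm_nonneg z] : 0 < 1 - ‖z‖ ^ 2)] at hn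
  rw [← hn]
  nlinarith

theorem stmt_19 (f : ℂ → ℂ)
    (hfd : DifferentiableOn ℂ f (Metric.ball (0 : ℂ) 1))
    (hf0 : f 0 = 0) (hf1 : deriv f 0 = 1)
    (hre : ∀ z : ℂ, ‖z‖ < 1 → z ≠ 0 → 0 < (f z / z).re) :
    ∀ z : ℂ, z ≠ 0 → ‖z‖ < 1 / (2 + Real.sqrt 5) →
      z * deriv f z / f z ∈ omegaCar := by
  intro z hz0 hz
  have h5 : Real.sqrt 5 ^ 2 = 5 := Real.sq_sqrt (by norm_num)
  have h5p : 0 < Real.sqrt 5 := by positivity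
  have hr : ‖z‖ < Real.sqrt 5 - 2 := by
    refine lt_of_lt_of_eq hz ?_
    rw [div_eq_iff (by positivity)]
    nlinarith
  have hz1 : ‖z‖ < 1 := by nlinarith
  let p : ℂ → ℂ := dslope f 0
  have hpd : DifferentiableOn ℂ p (Metric.ball (0 : ℂ) 1) :=
    (Complex.differentiableOn_dslope (Metric.ball_mem_nhds 0 one_pos)).mpr hfd
  have hpv : ∀ w : ℂ, w ≠ 0 → p w = f w / w := by
    intro w hw
    simp [p, dslope_of_ne _ hw, slope_def_field, hf0]
  have hpre : ∀ w : ℂ, ‖w‖ < 1 → 0 < (p w).re := by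
    intro w hw
    by_cases h : w = 0
    · subst h
      simp [p, hf1]
    · rw [hpv w h]
      exact hre w hw h
  have hb := deriv_bound p hpd hpre z hz1
  have hfp : ∀ w, f w = w * p w := by
    intro w
    by_cases h : w = 0
    · subst h; simp [hf0]
    · rw [hpv w h]; field_simp
  have hpz : p z ≠ 0 := by
    intro h
    have := hpre z hz1
    simp [h] at this
  have hfder : deriv f z = p z + z * deriv p z := by
    have h1 : HasDerivAt p (deriv p z) z :=
      (hpd.differentiableAt (Metric.isOpen_ball.mem_nhds (by simpa using hz1))).hasDerivAt
    have h2 := (hasDerivAt_id z).mul h1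
    have h3 : f = id * p := by
      funext w
      simpa using hfp w
    rw [h3, h2.deriv]
    simp
  have hmain : z * deriv f z / f z = 1 + z * deriv p z / p z := by
    rw [hfder, hfp z]
    field_simp
  rw [hmain]
  apply omega_of_small
  rw [norm_div, norm_mul, div_lt_iff₀ (norm_pos_iff.mpr hpz)]
  have hle := Complex.re_le_norm (p z)
  have hpp : 0 < ‖p z‖ := norm_pos_iff.mpr hpz
  have hzp : 0 < ‖z‖ := norm_pos_iff.mpr hz0
  have hq : 4 * ‖z‖ < 1 - ‖z‖ ^ 2 := by nlinarith
  have hd : 0 < 1 - ‖z‖ ^ 2 := by linarith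
  refine lt_of_mul_lt_mul_right ?_ hd.le
  calc ‖z‖ * ‖deriv p z‖ * (1 - ‖z‖ ^ 2) = ‖z‖ * (‖deriv p z‖ * (1 - ‖z‖ ^ 2)) := by ring
    _ ≤ ‖z‖ * (2 * ‖p z‖) := 
        mul_le_mul_of_nonneg_left (by linarith) hzp.le
    _ < 1 / 2 * ‖p z‖ * (1 - ‖z‖ ^ 2) := by nlinarith
end
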